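/- arXiv:1609.05998 — 2 statements merged into one kernel-verified Lean document; each statement's English description precedes it below -/
import Mathlib

section
/- Let A and B be m×n complex matrices with m ≥ n and rank(A) = rank(B) = n. If the matrix B†A (with B† the Moore–Penrose pseudoinverse of B) has no negative real eigenvalues, then for every t ∈ [0,1] the matrix (1−t)A + tB has rank n. -/
open Matrix

theorem Matrix.rank_eq_width_iff {K : Type*} [Field K] {m n : ℕ} (M : Matrix (Fin m) (Fin n) K) :
    M.rank = n ↔ ∀ v, M *ᵥ v = 0 → v = 0 := by
  have h := M.mulVecLin.finrank_range_add_finrank_ker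
  rw [Module.finrank_fin_fun] at h
  have hker : Module.finrank K (LinearMap.ker M.mulVecLin) = 0 ↔ ∀ v, M *ᵥ v = 0 → v = 0 := by
    rw [Submodule.finrank_eq_zero, LinearMap.ker_eq_bot']
    rfl
  rw [← hker, Matrix.rank]
  omega

open scoped ComplexOrder in
theorem Matrix.isUnit_det_conjTranspose_mul_self {m n : ℕ} {B : Matrix (Fin m) (Fin n) ℂ}
    (hB : B.rank = n) : IsUnit (Bᴴ * B).det := by
  rw [isUnit_iff_ne_zero]
  intro h
  obtain ⟨v, hv, hBv⟩ := Matrix.exists_mulVec_eq_zero_iff.mpr h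
  exact hv (B.rank_eq_width_iff.mp hB v ((conjTranspose_mul_self_mulVec_eq_zero B v).mp hBv))

/-- (Szulc) Let `A`, `B` be `m × n` complex matrices, `m ≥ n`, both of full column rank `n`.
If `B†A` (with `B† = (B*B)⁻¹B*` the Moore–Penrose pseudoinverse of the full-column-rank
matrix `B`) has no negative real eigenvalues, then every matrix `(1−t)A + tB`, `t ∈ [0,1]`,
has rank `n`. -/
theorem stmt9 {m n : ℕ} (hmn : n ≤ m)
    (A B : Matrix (Fin m) (Fin n) ℂ)
    (hA : A.rank = n) (hB : B.rank = n)
    (heig : ¬ ∃ (c : ℝ) (v : Fin n → ℂ), c < 0 ∧ v ≠ 0 ∧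
      (((Bᴴ * B)⁻¹ * Bᴴ * A).mulVec v = (c : ℂ) • v))
    (t : ℝ) (ht0 : 0 ≤ t) (ht1 : t ≤ 1) :
    ((((1 - t : ℝ) : ℂ) • A) + ((t : ℝ) : ℂ) • B).rank = n := by
  rw [Matrix.rank_eq_width_iff]
  intro v hv
  by_contra hv0
  rw [add_mulVec, smul_mulVec, smul_mulVec] at hv
  rcases ht1.eq_or_lt with rfl | ht1
  · exact hv0 (B.rank_eq_width_iff.mp hB v (by simpa using hv))
  rcases ht0.eq_or_lt with rfl | ht0
  · exact hv0 (A.rank_eq_width_iff.mp hA v (by simpa using hv))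
  have hs : ((1 - t : ℝ) : ℂ) ≠ 0 := by
    exact_mod_cast (sub_pos.mpr ht1).ne'
  have hAv : A *ᵥ v = ((-(t / (1 - t)) : ℝ) : ℂ) • B *ᵥ v := by
    apply smul_right_injective _ hs
    change ((1 - t : ℝ) : ℂ) • A *ᵥ v = ((1 - t : ℝ) : ℂ) • (_ • B *ᵥ v)
    rw [eq_neg_of_add_eq_zero_left hv, smul_smul, ← neg_smul, ← Complex.ofReal_mul, mul_neg,
      mul_div_cancel₀ _ (sub_pos.mpr ht1).ne', Complex.ofReal_neg]
  refine heig ⟨-(t / (1 - t)), v, neg_neg_of_pos (div_pos ht0 (sub_pos.mpr ht1)), hv0, ?_⟩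
  rw [← mulVec_mulVec, hAv, mulVec_smul, mulVec_mulVec, Matrix.mul_assoc,
    nonsing_inv_mul _ (isUnit_det_conjTranspose_mul_self hB), one_mulVec]
end

section
/- Let {φᵢ}ᵢ₌₁^N and {ψᵢ}ᵢ₌₁^N be disjoint frames for ℝ^d (the ranges of their analysis operators Φ and Ψ intersect only in {0}). Then for every t ∈ [0,1], the set {(1−t)φᵢ + tψᵢ}ᵢ₌₁^N is a frame for ℝ^d; in fact there exist constants C, A₀ > 0 such that Σᵢ ⟨v, (1−t)φᵢ + tψᵢ⟩² ≥ (1 − 2t + 2t²) C A₀ ‖v‖² for all v ∈ ℝ^d. -/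
open scoped RealInnerProductSpace

/-- The analysis operator `v ↦ (⟪v, φᵢ⟫)ᵢ` of a finite family of vectors. -/
noncomputable def analysisMap {ι E : Type*} [NormedAddCommGroup E] [InnerProductSpace ℝ E]
    (φ : ι → E) : E →ₗ[ℝ] (ι → ℝ) :=
  LinearMap.pi fun i => (innerₗ E).flip (φ i)

@[simp]
theorem analysisMap_apply {ι E : Type*} [NormedAddCommGroup E] [InnerProductSpace ℝ E]
    (φ : ι → E) (v : E) (i : ι) : analysisMap φ v i = ⟪v, φ i⟫ := rfl

/-- The analysis operator of a spanning family is injective. -/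
theorem analysisMap_injective {ι E : Type*} [NormedAddCommGroup E] [InnerProductSpace ℝ E]
    {φ : ι → E} (hφ : Submodule.span ℝ (Set.range φ) = ⊤) :
    Function.Injective (analysisMap φ) := by
  refine (injective_iff_map_eq_zero _).2 fun v hv => ?_
  have hle : Submodule.span ℝ (Set.range φ) ≤ LinearMap.ker (innerₗ E v) := by
    rw [Submodule.span_le]
    rintro _ ⟨i, rfl⟩
    exact congrFun hv i
  have hmem : v ∈ LinearMap.ker (innerₗ E v) := hle (hφ ▸ Submodule.mem_top)
  exact inner_self_eq_zero.1 hmem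

/-- An injective linear map from a product of finite-dimensional inner product spaces to `ι → ℝ`
is bounded below in the Euclidean norms. -/
theorem LinearMap.exists_pos_mul_le_sum_sq {ι E F : Type*} [Fintype ι]
    [NormedAddCommGroup E] [InnerProductSpace ℝ E] [FiniteDimensional ℝ E]
    [NormedAddCommGroup F] [InnerProductSpace ℝ F] [FiniteDimensional ℝ F]
    (T : E × F →ₗ[ℝ] (ι → ℝ)) (hT : Function.Injective T) :
    ∃ C : ℝ, 0 < C ∧ ∀ u w, C * (‖u‖ ^ 2 + ‖w‖ ^ 2) ≤ ∑ i, T (u, w) i ^ 2 := by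
  let S : WithLp 2 (E × F) →ₗ[ℝ] EuclideanSpace ℝ ι :=
    (WithLp.linearEquiv 2 ℝ (ι → ℝ)).symm.toLinearMap ∘ₗ T ∘ₗ
      (WithLp.linearEquiv 2 ℝ (E × F)).toLinearMap
  have hS : Function.Injective S :=
    (WithLp.linearEquiv 2 ℝ (ι → ℝ)).symm.injective.comp
      (hT.comp (WithLp.linearEquiv 2 ℝ (E × F)).injective)
  obtain ⟨K, hK, hlip⟩ := S.exists_antilipschitzWith (LinearMap.ker_eq_bot.2 hS)
  have hK' : (0 : ℝ) < K := hK
  refine ⟨((K : ℝ) ^ 2)⁻¹, by positivity, fun u w => ?_⟩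
  have h : ‖WithLp.toLp 2 (u, w)‖ ≤ K * ‖S (WithLp.toLp 2 (u, w))‖ := by
    simpa using hlip.le_mul_dist (WithLp.toLp 2 (u, w)) 0
  have h2 := pow_le_pow_left₀ (norm_nonneg _) h 2
  rw [mul_pow, WithLp.prod_norm_sq_eq_of_L2, EuclideanSpace.real_norm_sq_eq] at h2
  exact (inv_mul_le_iff₀ (by positivity)).2 h2

/-- Convex combinations of disjoint frames are frames: if the ranges of the analysis
operators of `{φᵢ}` and `{ψᵢ}` intersect only in `0`, then there are constants
`C, A₀ > 0` with `Σᵢ ⟨v, (1−t)φᵢ + tψᵢ⟩² ≥ (1 − 2t + 2t²) C A₀ ‖v‖²` for all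
`t ∈ [0,1]`, `v ∈ ℝ^d`; in particular each `{(1−t)φᵢ + tψᵢ}` is a frame. -/
theorem stmt15 {d N : ℕ}
    (φ ψ : Fin N → EuclideanSpace ℝ (Fin d))
    (hφ : Submodule.span ℝ (Set.range φ) = ⊤)
    (hψ : Submodule.span ℝ (Set.range ψ) = ⊤)
    (hdisj : Set.range (fun v : EuclideanSpace ℝ (Fin d) => fun i => ⟪v, φ i⟫) ∩
             Set.range (fun v : EuclideanSpace ℝ (Fin d) => fun i => ⟪v, ψ i⟫)
             = {(0 : Fin N → ℝ)}) :
    ∃ C A₀ : ℝ, 0 < C ∧ 0 < A₀ ∧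
      ∀ t : ℝ, 0 ≤ t → t ≤ 1 → ∀ v : EuclideanSpace ℝ (Fin d),
        (1 - 2 * t + 2 * t ^ 2) * C * A₀ * ‖v‖ ^ 2 ≤
          ∑ i, ⟪v, (1 - t) • φ i + t • ψ i⟫ ^ 2 := by
  have hinj : Function.Injective ((analysisMap φ).coprod (analysisMap ψ)) := by
    refine (injective_iff_map_eq_zero _).2 ?_
    rintro ⟨u, w⟩ h
    rw [LinearMap.coprod_apply] at h
    have hu : analysisMap φ u = 0 := by
      have hmem : analysisMap φ u ∈ ({0} : Set (Fin N → ℝ)) := by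
        rw [← hdisj]
        refine ⟨⟨u, rfl⟩, -w, ?_⟩
        exact ((analysisMap ψ).map_neg w).trans (eq_neg_of_add_eq_zero_left h).symm
      exact hmem
    have hw : analysisMap ψ w = 0 := by rwa [hu, zero_add] at h
    rw [(map_eq_zero_iff _ (analysisMap_injective hφ)).1 hu,
      (map_eq_zero_iff _ (analysisMap_injective hψ)).1 hw, Prod.mk_zero_zero]
  obtain ⟨C, hC, h⟩ := LinearMap.exists_pos_mul_le_sum_sq _ hinj
  refine ⟨C, 1, hC, one_pos, fun t _ _ v => ?_⟩
  calc (1 - 2 * t + 2 * t ^ 2) * C * 1 * ‖v‖ ^ 2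
      = C * (‖(1 - t) • v‖ ^ 2 + ‖t • v‖ ^ 2) := by
        simp only [norm_smul, mul_pow, Real.norm_eq_abs, sq_abs]
        ring
    _ ≤ _ := h _ _
    _ = ∑ i, ⟪v, (1 - t) • φ i + t • ψ i⟫ ^ 2 := by
        simp [inner_add_right, real_inner_smul_right]
end
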